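/- Let d ≥ 1 and let A and B be subsets of ℤ^d such that the upper density of A equals α > 0 and the Banach density of B is positive. Let α′ = lim_{i→∞} d̄(A_{[i]}) (this limit exists). If α′ > α then for every r < α′ the sumset A + B is upper syndetic of level r. If α′ = α then A + B is upper thick of level α, i.e. for every k ∈ ℕ, d̄({z ∈ ℤ^d : z + [-k,k]^d ⊆ A + B}) ≥ α. -/

import Mathlib

/-!
Write `C_k = [-k,k]^d`. Both parts rest on the elementary comparison of block sets with
thickenings: `d̄(A_[i]) ≤ d̄(A + C_i)` and `d̄(A + C_k) ≤ ((i + 2k)/i)^d d̄(A_[i])`.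

*Syndeticity.* A set `B` of positive Banach density `β` has thickenings `B + C_m` of Banach density
arbitrarily close to `1`: averaging `|B ∩ (y + C_m)|` over the `y` in a window where `B` has relative
density about `β`, only the `y ∈ B + C_m` contribute, each at most about `β |C_m|`, so almost all
`y` must lie in `B + C_m` (`exists_thickening_dense`). If `B' = B + C_m` fills a proportion `1 - ε`
of a huge window `x + C_L`, then `z ∈ A' + B'` as soon as `A'` occupies more than a proportion `ε`
of `z - x + C_L`; by averaging again this happens, uniformly on cubes `z + C_k`, for a set of `z` of
upper density at least `d̄(A') - 2ε` (`density_le_sumset`). Take `A' = A + C_i` with `i` large.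

*Thickness.* If `α' = α`, the comparison gives `d̄(A + C_k) ≤ α` for every `k`. A point of `A` whose
`k`-cube is not contained in `A` is within distance `k` of `(A + C_k) \ A`, which is negligible at
the scales where `A` has relative density close to `α`. So `A` itself is already upper thick of
level `α`, and it suffices that `B` is nonempty.

All limsup manipulations go through the single transfer lemma `density_transfer`.
-/

open Filter Pointwise

/-- The `d`-dimensional cube `[-m, m]^d` in `ℤ^d`. -/
def cube (d m : ℕ) : Set (Fin d → ℤ) :=
  Set.Icc (fun _ => -(m : ℤ)) (fun _ => (m : ℤ))

/-- The translated cube `z + [-k, k]^d`. -/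
def cubeAt (d k : ℕ) (z : Fin d → ℤ) : Set (Fin d → ℤ) :=
  Set.Icc (fun i => z i - (k : ℤ)) (fun i => z i + (k : ℤ))

/-- The `n`-block set `A_{[n]} = {x : (n·x + [0, n-1]^d) ∩ A ≠ ∅}`. -/
def blockSet (d : ℕ) (A : Set (Fin d → ℤ)) (n : ℕ) : Set (Fin d → ℤ) :=
  {x | ∃ t ∈ Set.Icc (0 : Fin d → ℤ) (fun _ => (n : ℤ) - 1), (n : ℤ) • x + t ∈ A}

/-- Upper asymptotic density of `A ⊆ ℤ^d`. -/
noncomputable def upperDensity (d : ℕ) (A : Set (Fin d → ℤ)) : ℝ :=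
  limsup (fun n : ℕ => (Set.ncard (A ∩ cube d n) : ℝ) / (2 * (n : ℝ) + 1) ^ d) atTop

/-- (Upper) Banach density of `A ⊆ ℤ^d`; the limit defining it exists, so we may
express it as a `limsup`. -/
noncomputable def banachDensity (d : ℕ) (A : Set (Fin d → ℤ)) : ℝ :=
  limsup (fun n : ℕ =>
    (⨆ x : Fin d → ℤ, (Set.ncard (A ∩ cubeAt d n x) : ℝ)) / (2 * (n : ℝ) + 1) ^ d) atTop

/-! ### Cubes and counting -/

lemma mem_cubeAt {d k : ℕ} {z y : Fin d → ℤ} :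
    y ∈ cubeAt d k z ↔ ∀ j, z j - k ≤ y j ∧ y j ≤ z j + k := by
  simp only [cubeAt, Set.mem_Icc, Pi.le_def]
  exact ⟨fun h j => ⟨h.1 j, h.2 j⟩, fun h => ⟨fun j => (h j).1, fun j => (h j).2⟩⟩

lemma mem_cube {d k : ℕ} {y : Fin d → ℤ} :
    y ∈ cube d k ↔ ∀ j, -(k : ℤ) ≤ y j ∧ y j ≤ k := by
  simp only [cube, Set.mem_Icc, Pi.le_def]
  exact ⟨fun h j => ⟨h.1 j, h.2 j⟩, fun h => ⟨fun j => (h j).1, fun j => (h j).2⟩⟩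

lemma finite_cubeAt (d k : ℕ) (z : Fin d → ℤ) : (cubeAt d k z).Finite := Set.finite_Icc _ _

lemma finite_cube (d k : ℕ) : (cube d k).Finite := Set.finite_Icc _ _

lemma ncard_box (d : ℕ) (u v : Fin d → ℤ) (w : ℕ) (h : ∀ j, v j + 1 - u j = w) :
    (Set.Icc u v).ncard = w ^ d := by
  rw [← Finset.coe_Icc, Set.ncard_coe_finset, Pi.card_Icc]
  simp [Int.card_Icc, h]

lemma ncard_cubeAt (d k : ℕ) (z : Fin d → ℤ) : (cubeAt d k z).ncard = (2 * k + 1) ^ d :=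
  ncard_box d _ _ _ (fun j => by push_cast; ring)

lemma ncard_cube (d k : ℕ) : (cube d k).ncard = (2 * k + 1) ^ d :=
  ncard_box d _ _ _ (fun j => by push_cast; ring)

lemma ncard_inter_cubeAt_le (d k : ℕ) (A : Set (Fin d → ℤ)) (z : Fin d → ℤ) :
    ((A ∩ cubeAt d k z).ncard : ℝ) ≤ (2 * (k : ℝ) + 1) ^ d := by
  have := Set.ncard_le_ncard (Set.inter_subset_right (s := A)) (finite_cubeAt d k z)
  rw [ncard_cubeAt] at this
  exact_mod_cast this

lemma ncard_inter_cube_le (d k : ℕ) (A : Set (Fin d → ℤ)) :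
    ((A ∩ cube d k).ncard : ℝ) ≤ (2 * (k : ℝ) + 1) ^ d := by
  have := Set.ncard_le_ncard (Set.inter_subset_right (s := A)) (finite_cube d k)
  rw [ncard_cube] at this
  exact_mod_cast this

lemma vol_pos (d n : ℕ) : (0 : ℝ) < (2 * (n : ℝ) + 1) ^ d := by positivity

lemma exists_mem_cube {d : ℕ} (x : Fin d → ℤ) : ∃ s : ℕ, x ∈ cube d s := by
  refine ⟨∑ j, (x j).natAbs, mem_cube.2 fun j => ?_⟩
  have := Finset.single_le_sum (f := fun j => (x j).natAbs) (fun _ _ => Nat.zero_le _)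
    (Finset.mem_univ j)
  omega

/-- Double counting of pairs `(a, z)` with `a ∈ P` and `z ∈ a + x + [-m,m]^d`. -/
lemma double_count {d : ℕ} (m : ℕ) (P X : Finset (Fin d → ℤ)) (x : Fin d → ℤ)
    (h : ∀ a ∈ P, cubeAt d m (a + x) ⊆ X) :
    (2 * m + 1) ^ d * P.card ≤ ∑ z ∈ X, ((P : Set (Fin d → ℤ)) ∩ cubeAt d m (z - x)).ncard := by
  classical
  have h1 : ∀ z, ((P : Set (Fin d → ℤ)) ∩ cubeAt d m (z - x)).ncard
      = ∑ a ∈ P, if a ∈ cubeAt d m (z - x) then 1 else 0 := by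
    intro z
    rw [Finset.sum_boole, ← Set.ncard_coe_finset]
    congr 1
    ext a
    simp
  have h2 : ∀ a ∈ P, (2 * m + 1) ^ d = ∑ z ∈ X, if a ∈ cubeAt d m (z - x) then 1 else 0 := by
    intro a ha
    rw [Finset.sum_boole, ← ncard_cubeAt d m (a + x), Nat.cast_id, ← Set.ncard_coe_finset]
    congr 1
    ext z
    have : a ∈ cubeAt d m (z - x) ↔ z ∈ cubeAt d m (a + x) := by
      simp only [mem_cubeAt, Pi.sub_apply, Pi.add_apply]
      exact forall_congr' fun j => by constructor <;> intro h <;> omega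
    simp only [Finset.coe_filter, Set.mem_ofPred_eq, this]
    exact ⟨fun hz => ⟨h a ha hz, hz⟩, fun hz => hz.2⟩
  simp_rw [h1]
  rw [Finset.sum_comm, mul_comm, ← smul_eq_mul, ← Finset.sum_const]
  exact le_of_eq (Finset.sum_congr rfl h2)

/-! ### Upper density -/

lemma density_bdd (d : ℕ) (A : Set (Fin d → ℤ)) :
    IsBoundedUnder (· ≤ ·) atTop
      (fun n : ℕ => (Set.ncard (A ∩ cube d n) : ℝ) / (2 * (n : ℝ) + 1) ^ d) :=
  isBoundedUnder_of ⟨1, fun n => by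
    rw [div_le_one (vol_pos d n)]; exact ncard_inter_cube_le d n A⟩

lemma density_cobdd (d : ℕ) (A : Set (Fin d → ℤ)) :
    IsCoboundedUnder (· ≤ ·) atTop
      (fun n : ℕ => (Set.ncard (A ∩ cube d n) : ℝ) / (2 * (n : ℝ) + 1) ^ d) :=
  (isBoundedUnder_of ⟨0, fun n => by positivity⟩ :
    IsBoundedUnder (· ≥ ·) atTop _).isCoboundedUnder_le

lemma eventually_le_of_density_lt {d : ℕ} {A : Set (Fin d → ℤ)} {c : ℝ}
    (h : upperDensity d A < c) :
    ∀ᶠ n : ℕ in atTop, (Set.ncard (A ∩ cube d n) : ℝ) ≤ c * (2 * (n : ℝ) + 1) ^ d := by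
  filter_upwards [eventually_lt_of_limsup_lt h (density_bdd d A)] with n hn
  exact ((div_lt_iff₀ (vol_pos d n)).1 hn).le

lemma density_univ_le (d : ℕ) : upperDensity d (Set.univ : Set (Fin d → ℤ)) ≤ 1 :=
  limsup_le_of_le (density_cobdd d _) (Eventually.of_forall fun n => by
    rw [div_le_one (vol_pos d n)]; exact ncard_inter_cube_le d n _)

/-- A counting inequality between sets, at scales `n` and `φ n ∼ (a/2) n`, passes to upper
densities. The two sets on the right are needed to exploit subadditivity of the limsup. -/
lemma density_transfer {d : ℕ} (A A₁ A₂ : Set (Fin d → ℤ)) (K₁ K₂ a b : ℝ) (hK₁ : 0 ≤ K₁)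
    (hK₂ : 0 ≤ K₂) (φ : ℕ → ℕ) (hφ : Tendsto φ atTop atTop)
    (hφ' : ∀ n, 2 * (φ n : ℝ) + 1 ≤ a * n + b)
    (h : ∀ n, ((A ∩ cube d n).ncard : ℝ) ≤
      K₁ * (A₁ ∩ cube d (φ n)).ncard + K₂ * (A₂ ∩ cube d (φ n)).ncard) :
    upperDensity d A ≤ (a / 2) ^ d * (K₁ * upperDensity d A₁ + K₂ * upperDensity d A₂) := by
  have key : ∀ δ : ℝ, 0 < δ → upperDensity d A ≤
      (a / 2) ^ d * (K₁ * (upperDensity d A₁ + δ) + K₂ * (upperDensity d A₂ + δ)) := by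
    intro δ hδ
    have e1 := hφ.eventually (eventually_le_of_density_lt
      (show upperDensity d A₁ < upperDensity d A₁ + δ by linarith))
    have e2 := hφ.eventually (eventually_le_of_density_lt
      (show upperDensity d A₂ < upperDensity d A₂ + δ by linarith))
    set p := upperDensity d A₁ + δ
    set q := upperDensity d A₂ + δ
    have hlim1 : Tendsto (fun n : ℕ => (a * (n : ℝ) + b) / (2 * (n : ℝ) + 1)) atTop
        (nhds (a / 2)) := by
      have hc : Tendsto (fun n : ℕ => a / 2 + (b - a / 2) / (2 * (n : ℝ) + 1)) atTop
          (nhds (a / 2 + 0)) := by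
        refine tendsto_const_nhds.add (Tendsto.div_atTop tendsto_const_nhds ?_)
        exact tendsto_atTop_add_const_right _ _
          (tendsto_natCast_atTop_atTop.const_mul_atTop (by norm_num))
      rw [add_zero] at hc
      refine hc.congr fun n => ?_
      have : (2 * (n : ℝ) + 1) ≠ 0 := by positivity
      field_simp
      ring
    have hlim : Tendsto (fun n : ℕ => ((a * (n : ℝ) + b) / (2 * (n : ℝ) + 1)) ^ d *
        (K₁ * p + K₂ * q)) atTop (nhds ((a / 2) ^ d * (K₁ * p + K₂ * q))) :=
      (hlim1.pow d).mul_const _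
    rw [← hlim.limsup_eq]
    refine limsup_le_limsup ?_ (density_cobdd d A) hlim.isBoundedUnder_le
    filter_upwards [e1, e2] with n h1 h2
    rw [div_pow, div_mul_eq_mul_div]
    refine div_le_div_of_nonneg_right ?_ (vol_pos d n).le
    have hs : (0 : ℝ) ≤ K₁ * p + K₂ * q := by
      have hp : 0 ≤ p := by
        by_contra! hp
        have := mul_neg_of_neg_of_pos hp (vol_pos d (φ n))
        have h0 : (0 : ℝ) ≤ (A₁ ∩ cube d (φ n)).ncard := by positivity
        linarith
      have hq : 0 ≤ q := by
        by_contra! hp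
        have := mul_neg_of_neg_of_pos hp (vol_pos d (φ n))
        have h0 : (0 : ℝ) ≤ (A₂ ∩ cube d (φ n)).ncard := by positivity
        linarith
      positivity
    calc ((A ∩ cube d n).ncard : ℝ) ≤ _ := h n
      _ ≤ K₁ * (p * (2 * (φ n : ℝ) + 1) ^ d) + K₂ * (q * (2 * (φ n : ℝ) + 1) ^ d) := by gcongr
      _ = (2 * (φ n : ℝ) + 1) ^ d * (K₁ * p + K₂ * q) := by ring
      _ ≤ (a * n + b) ^ d * (K₁ * p + K₂ * q) := by
        exact mul_le_mul_of_nonneg_right (pow_le_pow_left₀ (by positivity) (hφ' n) d) hs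
  have hl : Tendsto (fun δ : ℝ =>
      (a / 2) ^ d * (K₁ * (upperDensity d A₁ + δ) + K₂ * (upperDensity d A₂ + δ)))
      (nhdsWithin 0 (Set.Ioi 0)) (nhds ((a / 2) ^ d *
        (K₁ * (upperDensity d A₁ + 0) + K₂ * (upperDensity d A₂ + 0)))) := by
    refine Tendsto.mono_left (Continuous.tendsto ?_ 0) nhdsWithin_le_nhds
    fun_prop
  simp only [add_zero] at hl
  exact ge_of_tendsto hl (eventually_nhdsWithin_of_forall fun δ hδ => key δ hδ)

/-! ### Block sets and thickenings -/

lemma density_block_le {d : ℕ} (A : Set (Fin d → ℤ)) (i : ℕ) (hi : 1 ≤ i) :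
    upperDensity d (blockSet d A i) ≤ upperDensity d (A + cube d i) := by
  have hi0 : (0 : ℝ) < i := by exact_mod_cast hi
  have := density_transfer (blockSet d A i) (A + cube d i) ∅ ((1 / (i : ℝ)) ^ d) 0 (2 * i)
    (2 * i + 1) (by positivity) le_rfl (fun n => i * n + i)
    (tendsto_atTop_mono (fun n => by simp only [id]; nlinarith) tendsto_id)
    (fun n => by push_cast; nlinarith) ?_
  · rw [zero_mul, add_zero, ← mul_assoc, ← mul_pow] at this
    have h1 : (2 * (i : ℝ) / 2 * (1 / i)) = 1 := by field_simp
    rwa [h1, one_pow, one_mul] at this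
  intro n
  rw [zero_mul, add_zero, one_div, inv_pow, ← div_eq_inv_mul, le_div_iff₀ (by positivity)]
  -- the blocks `i x + [0,i-1]^d` over distinct `x` are disjoint
  set Q : Set (Fin d → ℤ) := Set.Icc 0 (fun _ => (i : ℤ) - 1) with hQ
  have hQc : Q.ncard = i ^ d := ncard_box d _ _ _ (fun j => by simp)
  have hmem : ∀ t : Fin d → ℤ, t ∈ Q ↔ ∀ j, 0 ≤ t j ∧ t j ≤ (i : ℤ) - 1 := by
    intro t
    simp only [hQ, Set.mem_Icc, Pi.le_def, Pi.zero_apply]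
    exact ⟨fun h j => ⟨h.1 j, h.2 j⟩, fun h => ⟨fun j => (h j).1, fun j => (h j).2⟩⟩
  have hinj : Set.InjOn (fun p : (Fin d → ℤ) × (Fin d → ℤ) => (i : ℤ) • p.1 + p.2)
      ((blockSet d A i ∩ cube d n) ×ˢ Q) := by
    rintro ⟨x, t⟩ ⟨-, ht⟩ ⟨y, s⟩ ⟨-, hs⟩ hxy
    have ht' := (hmem t).1 ht
    have hs' := (hmem s).1 hs
    have hip : (0 : ℤ) < i := by exact_mod_cast hi
    have hx : x = y := by
      funext j
      have := congrFun hxy j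
      simp only [Pi.add_apply, Pi.smul_apply, smul_eq_mul] at this
      have e1 : (i * x j + t j) / (i : ℤ) = x j := by
        rw [Int.mul_add_ediv_left _ _ hip.ne', Int.ediv_eq_zero_of_lt (ht' j).1
          (by have := (ht' j).2; omega), add_zero]
      have e2 : (i * y j + s j) / (i : ℤ) = y j := by
        rw [Int.mul_add_ediv_left _ _ hip.ne', Int.ediv_eq_zero_of_lt (hs' j).1
          (by have := (hs' j).2; omega), add_zero]
      rw [← e1, ← e2, this]
    subst hx
    simpa using hxy
  have hsub : (fun p : (Fin d → ℤ) × (Fin d → ℤ) => (i : ℤ) • p.1 + p.2) ''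
      ((blockSet d A i ∩ cube d n) ×ˢ Q) ⊆ (A + cube d i) ∩ cube d (i * n + i) := by
    rintro _ ⟨⟨x, t⟩, ⟨⟨⟨s, hs, hA⟩, hx⟩, ht⟩, rfl⟩
    have ht' := (hmem t).1 ht
    have hs' := (hmem s).1 hs
    refine ⟨Set.mem_add.2 ⟨_, hA, t - s, mem_cube.2 fun j => ?_, by simp⟩, mem_cube.2 fun j => ?_⟩
    · have := ht' j
      have := hs' j
      simp only [Pi.sub_apply]
      omega
    · have := ht' j
      have h2 := mem_cube.1 hx j
      simp only [Pi.add_apply, Pi.smul_apply, smul_eq_mul]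
      push_cast
      have h0 : (0 : ℤ) ≤ i := by positivity
      constructor <;> nlinarith
  have := Set.ncard_le_ncard hsub ((finite_cube d _).inter_of_right _)
  rw [hinj.ncard_image, Set.ncard_prod, hQc] at this
  exact_mod_cast this

lemma density_thickening_le {d : ℕ} (A : Set (Fin d → ℤ)) (k i : ℕ) (hi : 1 ≤ i) :
    upperDensity d (A + cube d k) ≤
      ((i + 2 * k : ℝ) / i) ^ d * upperDensity d (blockSet d A i) := by
  have hi0 : (0 : ℝ) < i := by exact_mod_cast hi
  have := density_transfer (A + cube d k) (blockSet d A i) ∅ ((i + 2 * k : ℝ) ^ d) 0 (2 / i)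
    (2 * k / i + 3) (by positivity) le_rfl (fun n => (n + k) / i + 1)
    ?_ (fun n => ?_) ?_
  · rw [zero_mul, add_zero, ← mul_assoc, ← mul_pow] at this
    have h1 : (2 / (i : ℝ) / 2 * (i + 2 * k)) = (i + 2 * k) / i := by field_simp
    rwa [h1] at this
  · refine tendsto_atTop_mono (f := fun n => n / i) (fun n => ?_) (Nat.tendsto_div_const_atTop (by omega))
    exact (Nat.div_le_div_right (by omega)).trans (Nat.le_succ _)
  · have h : (((n + k) / i : ℕ) : ℝ) ≤ ((n + k : ℕ) : ℝ) / i := Nat.cast_div_le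
    push_cast at h ⊢
    have : 2 / (i : ℝ) * n + (2 * k / i + 3) = 2 * ((n + k) / i) + 3 := by ring
    linarith
  intro n
  rw [zero_mul, add_zero]
  set Q : Set (Fin d → ℤ) := Set.Icc (fun _ => -(k : ℤ)) (fun _ => (i : ℤ) - 1 + k) with hQ
  have hQc : Q.ncard = (i + 2 * k) ^ d := ncard_box d _ _ _ (fun j => by push_cast; ring)
  have hsub : (A + cube d k) ∩ cube d n ⊆
      (fun p : (Fin d → ℤ) × (Fin d → ℤ) => (i : ℤ) • p.1 + p.2) ''
      ((blockSet d A i ∩ cube d ((n + k) / i + 1)) ×ˢ Q) := by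
    rintro _ ⟨⟨a, ha, c, hc, rfl⟩, hn⟩
    have hip : (0 : ℤ) < i := by exact_mod_cast hi
    have hdiv : ∀ j, (i : ℤ) * (a j / i) + a j % i = a j := fun j => Int.mul_ediv_add_emod _ _
    have h1 : ∀ j, 0 ≤ a j % i := fun j => Int.emod_nonneg _ hip.ne'
    have h2 : ∀ j, a j % i < i := fun j => Int.emod_lt_of_pos _ hip
    have hc' := mem_cube.1 hc
    have hn' := mem_cube.1 hn
    refine ⟨(fun j => a j / i, fun j => a j % i + c j), ⟨⟨⟨fun j => a j % i, ?_, ?_⟩, ?_⟩, ?_⟩, ?_⟩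
    · exact ⟨fun j => h1 j, fun j => by have := h2 j; simp only; omega⟩
    · convert ha using 1
      funext j
      simpa using hdiv j
    · refine mem_cube.2 fun j => ?_
      have h3 := hn' j
      have h4 := hc' j
      simp only [Pi.add_apply] at h3
      push_cast
      have h5 : a j ≤ n + k := by omega
      have h6 : -((n : ℤ) + k) ≤ a j := by omega
      have h7 := Int.ediv_le_ediv hip h5
      have h8 := Int.ediv_le_ediv hip h6
      have h9 : -(((n : ℤ) + k) / i) - 1 ≤ -((n : ℤ) + k) / i := by
        rw [Int.le_ediv_iff_mul_le hip]
        have e := Int.mul_ediv_add_emod ((n : ℤ) + k) i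
        have e2 := Int.emod_nonneg ((n : ℤ) + k) hip.ne'
        have e3 := Int.emod_lt_of_pos ((n : ℤ) + k) hip
        nlinarith
      omega
    · refine ⟨fun j => ?_, fun j => ?_⟩ <;>
      · have := h1 j
        have := h2 j
        have := hc' j
        simp only
        omega
    · funext j
      have := hdiv j
      simp only [Pi.add_apply, Pi.smul_apply, smul_eq_mul]
      omega
  have hfin : ((blockSet d A i ∩ cube d ((n + k) / i + 1)) ×ˢ Q).Finite :=
    ((finite_cube d _).inter_of_right _).prod (Set.finite_Icc _ _)
  have := (Set.ncard_le_ncard hsub (hfin.image _)).trans (Set.ncard_image_le hfin)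
  rw [Set.ncard_prod, hQc, mul_comm] at this
  exact_mod_cast this

lemma density_thickening_le_lim {d : ℕ} (A : Set (Fin d → ℤ)) (k : ℕ) (α' : ℝ)
    (hα' : Tendsto (fun i : ℕ => upperDensity d (blockSet d A i)) atTop (nhds α')) :
    upperDensity d (A + cube d k) ≤ α' := by
  have h1 : Tendsto (fun i : ℕ => ((i + 2 * k : ℝ) / i) ^ d) atTop (nhds (1 ^ d)) := by
    refine Tendsto.pow ?_ d
    have : Tendsto (fun i : ℕ => 1 + (2 * k : ℝ) / i) atTop (nhds (1 + 0)) :=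
      tendsto_const_nhds.add (Tendsto.div_atTop tendsto_const_nhds tendsto_natCast_atTop_atTop)
    rw [add_zero] at this
    refine this.congr' ?_
    filter_upwards [eventually_ge_atTop 1] with i hi
    have : (i : ℝ) ≠ 0 := by positivity
    field_simp
  have h2 := h1.mul hα'
  rw [one_pow, one_mul] at h2
  refine ge_of_tendsto h2 ?_
  filter_upwards [eventually_ge_atTop 1] with i hi
  exact density_thickening_le A k i hi

/-! ### Thickness -/

/-- If no thickening increases the upper density, then `A` is upper thick of level `d̄(A)`. -/
lemma density_le_thick {d : ℕ} (A : Set (Fin d → ℤ)) (k : ℕ)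
    (h : upperDensity d (A + cube d k) ≤ upperDensity d A) :
    upperDensity d A ≤ upperDensity d {z | cubeAt d k z ⊆ A} := by
  set T := {z | cubeAt d k z ⊆ A} with hT
  set V : ℝ := (2 * (k : ℝ) + 1) ^ d with hV
  have hVp : 0 < V := vol_pos d k
  have := density_transfer A T (A + cube d k) (1 / (1 + V)) (V / (1 + V)) 2 (2 * k + 1)
    (by positivity) (by positivity) (fun n => n + k) (tendsto_add_atTop_nat k)
    (fun n => by push_cast; linarith) ?_
  · rw [div_self two_ne_zero, one_pow, one_mul, ← mul_le_mul_iff_right₀ (show 0 < 1 + V by linarith)]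
      at this
    have e : (1 + V) * (1 / (1 + V) * upperDensity d T +
        V / (1 + V) * upperDensity d (A + cube d k))
        = upperDensity d T + V * upperDensity d (A + cube d k) := by
      field_simp
    rw [e] at this
    nlinarith
  intro n
  set D := (A + cube d k) \ A with hD
  -- a point of `A` outside `T` is within distance `k` of `D`
  have hsub : A ∩ cube d n ⊆ (T ∩ cube d (n + k)) ∪
      (fun p : (Fin d → ℤ) × (Fin d → ℤ) => p.1 + p.2) '' ((D ∩ cube d (n + k)) ×ˢ cube d k) := by
    rintro a ⟨ha, han⟩
    have han' := mem_cube.1 han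
    by_cases hTa : a ∈ T
    · exact Or.inl ⟨hTa, mem_cube.2 fun j => by have := han' j; push_cast; omega⟩
    · right
      simp only [hT, Set.mem_ofPred_eq, Set.not_subset] at hTa
      obtain ⟨y, hy, hyA⟩ := hTa
      have hy' := mem_cubeAt.1 hy
      refine ⟨(y, a - y), ⟨⟨⟨Set.mem_add.2 ⟨a, ha, y - a, mem_cube.2 fun j => ?_, by simp⟩, hyA⟩,
        mem_cube.2 fun j => ?_⟩, mem_cube.2 fun j => ?_⟩, by simp⟩
      all_goals
        have := hy' j
        have := han' j
        simp only [Pi.sub_apply]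
        push_cast
        omega
  have hfD : (D ∩ cube d (n + k)).Finite := (finite_cube d _).inter_of_right _
  have hfin := hfD.prod (finite_cube d k)
  have c1 := (Set.ncard_le_ncard hsub
    (((finite_cube d _).inter_of_right _).union (hfin.image _))).trans (Set.ncard_union_le _ _)
  have c2 := Set.ncard_image_le (f := fun p : (Fin d → ℤ) × (Fin d → ℤ) => p.1 + p.2) hfin
  rw [Set.ncard_prod, ncard_cube] at c2
  have c3 : (D ∩ cube d (n + k)).ncard + (A ∩ cube d n).ncard ≤
      ((A + cube d k) ∩ cube d (n + k)).ncard := by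
    rw [← Set.ncard_union_eq ?_ hfD ((finite_cube d _).inter_of_right _)]
    · refine Set.ncard_le_ncard ?_ ((finite_cube d _).inter_of_right _)
      rintro x (⟨hx, hxc⟩ | ⟨hx, hxc⟩)
      · exact ⟨hx.1, hxc⟩
      · refine ⟨Set.mem_add.2 ⟨x, hx, 0, mem_cube.2 fun j => by simp, by simp⟩,
          mem_cube.2 fun j => ?_⟩
        have := mem_cube.1 hxc j
        push_cast
        omega
    · rw [Set.disjoint_left]
      rintro x ⟨hx, -⟩ ⟨hx', -⟩
      exact hx.2 hx'
  have c4 : ((A ∩ cube d n).ncard : ℝ) ≤ (T ∩ cube d (n + k)).ncard +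
      (D ∩ cube d (n + k)).ncard * V := by
    rw [hV]; exact_mod_cast c1.trans (Nat.add_le_add_left c2 _)
  have c5 : ((D ∩ cube d (n + k)).ncard : ℝ) + (A ∩ cube d n).ncard ≤
      ((A + cube d k) ∩ cube d (n + k)).ncard := by exact_mod_cast c3
  rw [← mul_le_mul_iff_right₀ (show 0 < 1 + V by linarith)]
  have e : (1 + V) * (1 / (1 + V) * ((T ∩ cube d (n + k)).ncard : ℝ) +
      V / (1 + V) * ((A + cube d k) ∩ cube d (n + k)).ncard)
      = (T ∩ cube d (n + k)).ncard + V * ((A + cube d k) ∩ cube d (n + k)).ncard := by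
    field_simp
  rw [e]
  nlinarith

/-! ### Banach density -/

lemma iSup_le_vol (d n : ℕ) (B : Set (Fin d → ℤ)) :
    (⨆ x : Fin d → ℤ, (Set.ncard (B ∩ cubeAt d n x) : ℝ)) ≤ (2 * (n : ℝ) + 1) ^ d :=
  ciSup_le fun x => ncard_inter_cubeAt_le d n B x

lemma le_iSup_window (d n : ℕ) (B : Set (Fin d → ℤ)) (x : Fin d → ℤ) :
    (Set.ncard (B ∩ cubeAt d n x) : ℝ) ≤ ⨆ x : Fin d → ℤ, (Set.ncard (B ∩ cubeAt d n x) : ℝ) :=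
  le_ciSup (f := fun x => (Set.ncard (B ∩ cubeAt d n x) : ℝ))
    ⟨_, by rintro _ ⟨y, rfl⟩; exact ncard_inter_cubeAt_le d n B y⟩ x

/-- For every `s`, `((2n+1)/(2(n+s)+1))^d → 1`. -/
lemma eventually_vol_ratio (d s : ℕ) (c : ℝ) (hc : c < 1) :
    ∀ᶠ n : ℕ in atTop, c * (2 * ((n + s : ℕ) : ℝ) + 1) ^ d ≤ (2 * (n : ℝ) + 1) ^ d := by
  have h1 : Tendsto (fun n : ℕ => ((1 : ℝ) - (2 * s) / (2 * ((n + s : ℕ) : ℝ) + 1)) ^ d) atTop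
      (nhds ((1 - 0) ^ d)) := by
    refine Tendsto.pow (tendsto_const_nhds.sub (Tendsto.div_atTop tendsto_const_nhds ?_)) d
    refine tendsto_atTop_mono (fun n => ?_) tendsto_natCast_atTop_atTop
    push_cast
    have : (0 : ℝ) ≤ n := by positivity
    have : (0 : ℝ) ≤ s := by positivity
    linarith
  rw [sub_zero, one_pow] at h1
  filter_upwards [h1.eventually (lt_mem_nhds hc)] with n hn
  have hp : (0 : ℝ) < 2 * ((n + s : ℕ) : ℝ) + 1 := by positivity
  have e : (1 : ℝ) - (2 * s) / (2 * ((n + s : ℕ) : ℝ) + 1)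
      = (2 * n + 1) / (2 * ((n + s : ℕ) : ℝ) + 1) := by
    field_simp
    push_cast
    ring
  rw [e, div_pow, lt_div_iff₀ (by positivity)] at hn
  exact hn.le

/-- Thickenings of a set of positive Banach density have Banach density arbitrarily close to `1`. -/
lemma exists_thickening_dense {d : ℕ} (B : Set (Fin d → ℤ)) (hB : 0 < banachDensity d B)
    (ε : ℝ) (hε : 0 < ε) : ∃ m : ℕ, ∀ L₀ : ℕ, ∃ L ≥ L₀, ∃ x : Fin d → ℤ,
      (1 - ε) * (2 * (L : ℝ) + 1) ^ d ≤ ((B + cube d m) ∩ cubeAt d L x).ncard := by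
  wlog hε1 : ε < 1 generalizing ε
  · obtain ⟨m, hm⟩ := this (1 / 2) (by norm_num) (by norm_num)
    refine ⟨m, fun L₀ => ?_⟩
    obtain ⟨L, hL, x, hx⟩ := hm L₀
    refine ⟨L, hL, x, le_trans ?_ hx⟩
    gcongr
    linarith
  set β := banachDensity d B with hβ
  -- chosen so that `(β - η) / (β + η) > 1 - ε / 2`
  set η := β * ε / 8 with hη
  have hηp : 0 < η := by positivity
  have hbdd : IsBoundedUnder (· ≤ ·) atTop (fun n : ℕ =>
      (⨆ x : Fin d → ℤ, (Set.ncard (B ∩ cubeAt d n x) : ℝ)) / (2 * (n : ℝ) + 1) ^ d) :=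
    isBoundedUnder_of ⟨1, fun n => by
      rw [div_le_one (vol_pos d n)]; exact iSup_le_vol d n B⟩
  have hcob : IsCoboundedUnder (· ≤ ·) atTop (fun n : ℕ =>
      (⨆ x : Fin d → ℤ, (Set.ncard (B ∩ cubeAt d n x) : ℝ)) / (2 * (n : ℝ) + 1) ^ d) :=
    (isBoundedUnder_of ⟨0, fun n => div_nonneg (Real.iSup_nonneg fun _ => by positivity)
      (vol_pos d n).le⟩ : IsBoundedUnder (· ≥ ·) atTop _).isCoboundedUnder_le
  have hlt : banachDensity d B < β + η := by linarith
  have hgt : β - η < banachDensity d B := by linarith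
  obtain ⟨m, hm⟩ := (eventually_lt_of_limsup_lt hlt hbdd).exists
  rw [div_lt_iff₀ (vol_pos d m)] at hm
  have hfreq := frequently_lt_of_lt_limsup hcob hgt
  refine ⟨m, fun L₀ => ?_⟩
  obtain ⟨L, hL1, hL2, hL3⟩ := (hfreq.and_eventually
    ((eventually_vol_ratio d m (1 - ε / 2) (by linarith)).and (eventually_ge_atTop L₀))).exists
  rw [lt_div_iff₀ (vol_pos d L)] at hL1
  obtain ⟨x, hx⟩ := exists_lt_of_lt_ciSup hL1
  refine ⟨L + m, by omega, x, ?_⟩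
  classical
  set P : Finset (Fin d → ℤ) := ((finite_cubeAt d L x).inter_of_right B).toFinset with hP
  set X : Finset (Fin d → ℤ) := (finite_cubeAt d (L + m) x).toFinset with hX
  have hPc : P.card = (B ∩ cubeAt d L x).ncard := (Set.ncard_eq_toFinset_card _ _).symm
  have hdc := double_count m P X 0 (fun a ha y hy => by
    simp only [hP, Set.Finite.mem_toFinset, Set.mem_inter_iff] at ha
    rw [hX, Set.Finite.coe_toFinset]
    have h1 := mem_cubeAt.1 ha.2
    have h2 := mem_cubeAt.1 hy
    refine mem_cubeAt.2 fun j => ?_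
    have h3 := h1 j
    have h4 := h2 j
    simp only [add_zero] at h4
    push_cast
    omega)
  simp only [sub_zero] at hdc
  set S := (B + cube d m) ∩ cubeAt d (L + m) x with hS
  have hSf : S.Finite := (finite_cubeAt d _ x).inter_of_right _
  have hterm : ∀ z ∈ X, (((P : Set (Fin d → ℤ)) ∩ cubeAt d m z).ncard : ℝ) ≤
      if z ∈ S then (β + η) * (2 * (m : ℝ) + 1) ^ d else 0 := by
    intro z hz
    have hPB : (P : Set (Fin d → ℤ)) ⊆ B := by
      rw [hP, Set.Finite.coe_toFinset]; exact Set.inter_subset_left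
    split_ifs with hzS
    · refine le_trans ?_ ((le_iSup_window d m B z).trans hm.le)
      exact_mod_cast Set.ncard_le_ncard (Set.inter_subset_inter_left _ hPB)
        ((finite_cubeAt d m z).inter_of_right _)
    · have : (P : Set (Fin d → ℤ)) ∩ cubeAt d m z = ∅ := by
        rw [Set.eq_empty_iff_forall_notMem]
        rintro b ⟨hb, hbz⟩
        refine hzS ⟨Set.mem_add.2 ⟨b, hPB hb, z - b, mem_cube.2 fun j => ?_, by simp⟩, ?_⟩
        · have := mem_cubeAt.1 hbz j
          simp only [Pi.sub_apply]
          omega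
        · simpa [hX] using hz
      rw [this]
      simp
  have hsum : ((∑ z ∈ X, ((P : Set (Fin d → ℤ)) ∩ cubeAt d m z).ncard : ℕ) : ℝ) ≤
      S.ncard * ((β + η) * (2 * (m : ℝ) + 1) ^ d) := by
    push_cast
    refine (Finset.sum_le_sum hterm).trans (le_of_eq ?_)
    rw [← Finset.sum_filter, Finset.sum_const, nsmul_eq_mul, ← Set.ncard_coe_finset]
    congr 3
    ext z
    simp only [Finset.coe_filter, Set.mem_ofPred_eq, hX, Set.Finite.mem_toFinset]
    exact ⟨fun h => h.2, fun h => ⟨h.2, h⟩⟩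
  have hdc' : (2 * (m : ℝ) + 1) ^ d * P.card ≤
      ((∑ z ∈ X, ((P : Set (Fin d → ℤ)) ∩ cubeAt d m z).ncard : ℕ) : ℝ) := by
    exact_mod_cast hdc
  have h1 : (P.card : ℝ) ≤ S.ncard * (β + η) := by
    have hv := vol_pos d m
    refine le_of_mul_le_mul_left ?_ hv
    calc _ ≤ _ := hdc'.trans hsum
      _ = _ := by ring
  rw [hPc] at h1
  have h2 : (β - η) * (2 * (L : ℝ) + 1) ^ d ≤ S.ncard * (β + η) := hx.le.trans h1
  have hβη : 0 < β - η := by rw [hη]; nlinarith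
  refine le_of_mul_le_mul_right ?_ (show 0 < β + η by linarith)
  refine le_trans ?_ h2
  have h3 : (1 - ε) * (β + η) ≤ (β - η) * (1 - ε / 2) := by
    rw [hη]; nlinarith [mul_pos hB hε, mul_pos (mul_pos hB hε) hε]
  calc (1 - ε) * (2 * ((L + m : ℕ) : ℝ) + 1) ^ d * (β + η)
      = (1 - ε) * (β + η) * (2 * ((L + m : ℕ) : ℝ) + 1) ^ d := by ring
    _ ≤ (β - η) * (1 - ε / 2) * (2 * ((L + m : ℕ) : ℝ) + 1) ^ d := by gcongr
    _ = (β - η) * ((1 - ε / 2) * (2 * ((L + m : ℕ) : ℝ) + 1) ^ d) := by ring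
    _ ≤ _ := by gcongr

/-! ### Sumsets -/

/-- If `B` fills a proportion `1 - ε` of arbitrarily large cubes, then `A + B` is upper thick of
level `d̄(A) - 2ε`. -/
lemma density_le_sumset {d : ℕ} (A B : Set (Fin d → ℤ)) (ε : ℝ) (hε : 0 < ε)
    (hB : ∀ L₀ : ℕ, ∃ L ≥ L₀, ∃ x : Fin d → ℤ,
      (1 - ε) * (2 * (L : ℝ) + 1) ^ d ≤ (B ∩ cubeAt d L x).ncard) (k : ℕ) :
    upperDensity d A ≤ upperDensity d {z | cubeAt d k z ⊆ A + B} + 2 * ε := by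
  set T := {z | cubeAt d k z ⊆ A + B} with hT
  obtain ⟨M₀, hM₀⟩ := eventually_atTop.1 (eventually_vol_ratio d k (1 / 2) (by norm_num))
  obtain ⟨L, hL, x, hx⟩ := hB (M₀ + k)
  obtain ⟨M, rfl⟩ : ∃ M, L = M + k := ⟨L - k, by omega⟩
  have hM := hM₀ M (by omega)
  obtain ⟨s, hs⟩ := exists_mem_cube x
  have := density_transfer A T Set.univ 1 (2 * ε) 2 (2 * (M + s) + 1)
    zero_le_one (by positivity) (fun n => n + (M + s)) (tendsto_add_atTop_nat _)
    (fun n => by push_cast; linarith) ?_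
  · rw [div_self two_ne_zero, one_pow, one_mul, one_mul] at this
    have := density_univ_le d
    nlinarith
  intro n
  -- for `z ∉ T`, `A` meets `z - x + [-M,M]^d` in few points
  have hgood : ∀ z, z ∉ T → ((A ∩ cubeAt d M (z - x)).ncard : ℝ) ≤
      2 * ε * (2 * (M : ℝ) + 1) ^ d := by
    intro z hz
    simp only [hT, Set.mem_ofPred_eq, Set.not_subset] at hz
    obtain ⟨y, hy, hyAB⟩ := hz
    have hy' := mem_cubeAt.1 hy
    have hdisj : Disjoint ((fun a => y - a) '' (A ∩ cubeAt d M (z - x)))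
        (B ∩ cubeAt d (M + k) x) := by
      rw [Set.disjoint_left]
      rintro _ ⟨a, ⟨ha, -⟩, rfl⟩ ⟨hb, -⟩
      exact hyAB (Set.mem_add.2 ⟨a, ha, _, hb, by simp⟩)
    have hsub : (fun a => y - a) '' (A ∩ cubeAt d M (z - x)) ∪ (B ∩ cubeAt d (M + k) x) ⊆
        cubeAt d (M + k) x := by
      rintro _ (⟨a, ⟨-, ha⟩, rfl⟩ | ⟨-, h⟩)
      · refine mem_cubeAt.2 fun j => ?_
        have h1 := mem_cubeAt.1 ha j
        have h2 := hy' j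
        simp only [Pi.sub_apply] at h1 ⊢
        push_cast
        omega
      · exact h
    have hc := Set.ncard_le_ncard hsub (finite_cubeAt d _ _)
    rw [Set.ncard_union_eq hdisj (((finite_cubeAt d _ _).inter_of_right _).image _)
      ((finite_cubeAt d _ _).inter_of_right _), ncard_cubeAt,
      Set.ncard_image_of_injective _ (sub_right_injective)] at hc
    have hc' : ((A ∩ cubeAt d M (z - x)).ncard : ℝ) + (B ∩ cubeAt d (M + k) x).ncard ≤
        (2 * ((M + k : ℕ) : ℝ) + 1) ^ d := by exact_mod_cast hc
    nlinarith
  classical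
  set P : Finset (Fin d → ℤ) := ((finite_cube d n).inter_of_right A).toFinset with hP
  set X : Finset (Fin d → ℤ) := (finite_cube d (n + (M + s))).toFinset with hX
  have hPc : P.card = (A ∩ cube d n).ncard := (Set.ncard_eq_toFinset_card _ _).symm
  have hdc := double_count M P X x (fun a ha y hy => by
    simp only [hP, Set.Finite.mem_toFinset, Set.mem_inter_iff] at ha
    rw [hX, Set.Finite.coe_toFinset]
    refine mem_cube.2 fun j => ?_
    have h1 := mem_cube.1 ha.2 j
    have h2 := mem_cubeAt.1 hy j
    have h3 := mem_cube.1 hs j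
    simp only [Pi.add_apply] at h2
    push_cast
    omega)
  have hPA : (P : Set (Fin d → ℤ)) ⊆ A := by
    rw [hP, Set.Finite.coe_toFinset]; exact Set.inter_subset_left
  have hterm : ∀ z ∈ X, (((P : Set (Fin d → ℤ)) ∩ cubeAt d M (z - x)).ncard : ℝ) ≤
      (if z ∈ T then (2 * (M : ℝ) + 1) ^ d else 0) + 2 * ε * (2 * (M : ℝ) + 1) ^ d := by
    intro z _
    have hpos := vol_pos d M
    split_ifs with hzT
    · have := ncard_inter_cubeAt_le d M P (z - x)
      nlinarith
    · rw [zero_add]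
      refine le_trans ?_ (hgood z hzT)
      exact_mod_cast Set.ncard_le_ncard (Set.inter_subset_inter_left _ hPA)
        ((finite_cubeAt d M _).inter_of_right _)
  have hsum : ((∑ z ∈ X, ((P : Set (Fin d → ℤ)) ∩ cubeAt d M (z - x)).ncard : ℕ) : ℝ) ≤
      (T ∩ cube d (n + (M + s))).ncard * (2 * (M : ℝ) + 1) ^ d +
      (Set.univ ∩ cube d (n + (M + s))).ncard * (2 * ε * (2 * (M : ℝ) + 1) ^ d) := by
    push_cast
    refine (Finset.sum_le_sum hterm).trans (le_of_eq ?_)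
    rw [Finset.sum_add_distrib, ← Finset.sum_filter, Finset.sum_const, Finset.sum_const,
      nsmul_eq_mul, nsmul_eq_mul, ← Set.ncard_coe_finset, ← Set.ncard_coe_finset]
    congr 4
    · ext z
      simp only [Finset.coe_filter, Set.mem_ofPred_eq, hX, Set.Finite.mem_toFinset]
      exact and_comm
    · simp [hX]
  have hdc' : (2 * (M : ℝ) + 1) ^ d * P.card ≤
      ((∑ z ∈ X, ((P : Set (Fin d → ℤ)) ∩ cubeAt d M (z - x)).ncard : ℕ) : ℝ) := by
    exact_mod_cast hdc
  rw [← hPc]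
  refine le_of_mul_le_mul_left ?_ (vol_pos d M)
  calc _ ≤ _ := hdc'.trans hsum
    _ = _ := by ring

lemma cube_add_cube_subset (d m n : ℕ) : cube d m + cube d n ⊆ cube d (m + n) := by
  rintro _ ⟨a, ha, b, hb, rfl⟩
  refine mem_cube.2 fun j => ?_
  have := mem_cube.1 ha j
  have := mem_cube.1 hb j
  simp only [Pi.add_apply]
  push_cast
  omega

lemma density_mono {d : ℕ} {A A' : Set (Fin d → ℤ)} (h : A ⊆ A') :
    upperDensity d A ≤ upperDensity d A' := by
  refine limsup_le_limsup (Eventually.of_forall fun n => ?_) (density_cobdd d A) (density_bdd d A')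
  refine div_le_div_of_nonneg_right ?_ (vol_pos d n).le
  exact_mod_cast Set.ncard_le_ncard (Set.inter_subset_inter_left _ h)
    ((finite_cube d n).inter_of_right _)

lemma nonempty_of_banachDensity_pos {d : ℕ} {B : Set (Fin d → ℤ)} (hB : 0 < banachDensity d B) :
    B.Nonempty := by
  by_contra h
  rw [Set.not_nonempty_iff_eq_empty] at h
  subst h
  simp [banachDensity] at hB

theorem stmt_5 (d : ℕ) (hd : 1 ≤ d) (A B : Set (Fin d → ℤ)) (α α' : ℝ)
    (hA : upperDensity d A = α) (hα : 0 < α) (hB : 0 < banachDensity d B)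
    (hα' : Tendsto (fun i : ℕ => upperDensity d (blockSet d A i)) atTop (nhds α')) :
    (α < α' → ∀ r : ℝ, r < α' → ∃ m : ℕ, ∀ k : ℕ,
      r ≤ upperDensity d {z : Fin d → ℤ | cubeAt d k z ⊆ A + B + cube d m}) ∧
    (α' = α → ∀ k : ℕ,
      α ≤ upperDensity d {z : Fin d → ℤ | cubeAt d k z ⊆ A + B}) := by
  constructor
  · intro _ r hr
    set ε := (α' - r) / 4 with hε
    have hεp : 0 < ε := by rw [hε]; linarith
    obtain ⟨i, hi, hi1⟩ := ((hα'.eventually (lt_mem_nhds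
      (show α' - ε < α' by linarith))).and (eventually_ge_atTop 1)).exists
    obtain ⟨m, hm⟩ := exists_thickening_dense B hB ε hεp
    refine ⟨i + m, fun k => ?_⟩
    have h1 := density_block_le A i hi1
    have h2 := density_le_sumset (A + cube d i) (B + cube d m) ε hεp hm k
    have h3 : upperDensity d {z | cubeAt d k z ⊆ A + cube d i + (B + cube d m)} ≤
        upperDensity d {z : Fin d → ℤ | cubeAt d k z ⊆ A + B + cube d (i + m)} := by
      refine density_mono fun z hz => Set.Subset.trans hz ?_
      rw [add_add_add_comm]
      exact Set.add_subset_add_left (cube_add_cube_subset d i m)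
    linarith
  · rintro rfl k
    obtain ⟨b, hb⟩ := nonempty_of_banachDensity_pos hB
    obtain ⟨s, hs⟩ := exists_mem_cube b
    have h1 := density_le_thick A (k + s)
      ((density_thickening_le_lim A (k + s) _ hα').trans hA.ge)
    rw [hA] at h1
    refine h1.trans (density_mono fun z hz y hy => ?_)
    refine Set.mem_add.2 ⟨y - b, hz (mem_cubeAt.2 fun j => ?_), b, hb, by simp⟩
    have := mem_cubeAt.1 hy j
    have := mem_cube.1 hs j
    simp only [Pi.sub_apply]
    push_cast
    omega
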